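/- arXiv:1505.07099 — 4 statements merged into one kernel-verified Lean document; each statement's English description precedes it below -/
import Mathlib

section
/- The series over pairs of nonnegative integers (n₁, n₂) with n := n₁ + n₂ ≥ 2 of the terms ((2n₁)! (2n₂)!) / (4ⁿ · (n₁!)² · (n₂!)²) · (2n − 1) / (n · (n−1)²) is convergent (summable). -/
/-! The numbers `(2k)! / (4ᵏ (k!)²) = centralBinom k / 4ᵏ` are the Taylor coefficients of
`(1 - x)^(-1/2)`, whose square is `(1 - x)⁻¹`; hence the factorial weights with `n₁ + n₂ = n` add up
to exactly `1`. All terms are nonnegative, so summing along the antidiagonals reduces the double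
series to `∑ (2n - 1) / (n (n - 1)²)`, which is dominated by `∑ 2 / (n - 1)²`. -/

open Finset

theorem two_mul_sum_antidiagonal_fst_mul_of_swap {R : Type*} [NonAssocSemiring R] {f : ℕ × ℕ → R}
    (hf : ∀ p, f p.swap = f p) (n : ℕ) :
    2 * ∑ p ∈ antidiagonal n, (p.1 : R) * f p = n * ∑ p ∈ antidiagonal n, f p := by
  have snd_eq_fst : ∑ p ∈ antidiagonal n, (p.2 : R) * f p = ∑ p ∈ antidiagonal n, p.1 * f p := by
    rw [← Nat.sum_antidiagonal_swap]
    simp only [hf, Prod.snd_swap]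
  calc 2 * ∑ p ∈ antidiagonal n, (p.1 : R) * f p
      = ∑ p ∈ antidiagonal n, ((p.1 : R) * f p + p.2 * f p) := by
        rw [sum_add_distrib, snd_eq_fst, two_mul]
    _ = n * ∑ p ∈ antidiagonal n, f p := by
        rw [mul_sum]
        refine sum_congr rfl fun p hp => ?_
        rw [← add_mul, ← Nat.cast_add, mem_antidiagonal.mp hp]

-- For `f k = centralBinom k`, the recurrence `(k + 1) f (k + 1) = 2 (2k + 1) f k` turns the
-- convolution weighted by its first index into the plain one; symmetry removes the weight.
theorem sum_antidiagonal_centralBinom_mul_centralBinom (n : ℕ) :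
    ∑ p ∈ antidiagonal n, p.1.centralBinom * p.2.centralBinom = 4 ^ n := by
  have weighted (m : ℕ) := two_mul_sum_antidiagonal_fst_mul_of_swap
    (f := fun p => p.1.centralBinom * p.2.centralBinom) (fun _ => mul_comm _ _) m
  simp only [Nat.cast_id] at weighted
  induction n with
  | zero => simp
  | succ n ih =>
    refine Nat.eq_of_mul_eq_mul_left n.succ_pos ?_
    calc (n + 1) * ∑ p ∈ antidiagonal (n + 1), p.1.centralBinom * p.2.centralBinom
        = 2 * ∑ p ∈ antidiagonal n,
            (p.1 + 1) * ((p.1 + 1).centralBinom * p.2.centralBinom) := by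
          rw [← weighted, Nat.sum_antidiagonal_succ, zero_mul, zero_add]
      _ = 2 * ∑ p ∈ antidiagonal n, (4 * (p.1 * (p.1.centralBinom * p.2.centralBinom)) +
            2 * (p.1.centralBinom * p.2.centralBinom)) := by
          simp only [← mul_assoc, Nat.succ_mul_centralBinom_succ]
          congr! 2
          ring
      _ = 4 * (2 * ∑ p ∈ antidiagonal n, p.1 * (p.1.centralBinom * p.2.centralBinom)) +
            4 * ∑ p ∈ antidiagonal n, p.1.centralBinom * p.2.centralBinom := by
          rw [sum_add_distrib, ← mul_sum, ← mul_sum]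
          ring
      _ = (n + 1) * 4 ^ (n + 1) := by
          rw [weighted, ih]
          ring

theorem cast_centralBinom_eq_div (K : Type*) [DivisionSemiring K] [CharZero K] (n : ℕ) :
    (n.centralBinom : K) = (2 * n).factorial / (n.factorial * n.factorial) := by
  rw [Nat.centralBinom_eq_two_mul_choose, two_mul, Nat.cast_add_choose]

theorem summable_iff_summable_sum_antidiagonal_of_nonneg {A : Type*} [AddCommMonoid A]
    [HasAntidiagonal A] {f : A × A → ℝ} (hf : ∀ p, 0 ≤ f p) :
    Summable f ↔ Summable fun n => ∑ p ∈ antidiagonal n, f p := by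
  have comp_nonneg (x) : 0 ≤ (f ∘ HasAntidiagonal.sigmaAntidiagonalEquivProd) x := hf _
  rw [← HasAntidiagonal.sigmaAntidiagonalEquivProd.summable_iff,
    summable_sigma_of_nonneg comp_nonneg]
  simp only [Function.comp_apply, HasAntidiagonal.sigmaAntidiagonalEquivProd_apply, tsum_fintype,
    sum_coe_sort _ f, (hasSum_fintype _).summable, implies_true, true_and]

theorem summable_centralBinom_mul_centralBinom_div_mul_iff {c : ℕ → ℝ} :
    (Summable fun p : ℕ × ℕ =>
      (p.1.centralBinom * p.2.centralBinom : ℝ) / 4 ^ (p.1 + p.2) * c (p.1 + p.2)) ↔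
      Summable c := by
  rw [← summable_abs_iff, ← summable_abs_iff (f := c),
    summable_iff_summable_sum_antidiagonal_of_nonneg fun _ => abs_nonneg _]
  refine summable_congr fun n => ?_
  have sum_eq : ∑ p ∈ antidiagonal n, (p.1.centralBinom * p.2.centralBinom : ℝ) = 4 ^ n :=
    mod_cast sum_antidiagonal_centralBinom_mul_centralBinom n
  calc ∑ p ∈ antidiagonal n,
        |(p.1.centralBinom * p.2.centralBinom : ℝ) / 4 ^ (p.1 + p.2) * c (p.1 + p.2)|
      = ∑ p ∈ antidiagonal n, (p.1.centralBinom * p.2.centralBinom : ℝ) / 4 ^ n * |c n| := by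
        refine sum_congr rfl fun p hp => ?_
        rw [mem_antidiagonal.mp hp, abs_mul, abs_of_nonneg (by positivity)]
    _ = |c n| := by
        rw [← sum_mul, ← sum_div, sum_eq, div_self (by positivity), one_mul]

-- The terms at `n = 0` and `n = 1` are `0`, by division by zero.
theorem summable_two_mul_sub_one_div_mul_sub_one_sq :
    Summable fun n : ℕ => ((2 * n - 1 : ℕ) : ℝ) / (n * ((n - 1 : ℕ) : ℝ) ^ 2) := by
  have summable_shift : Summable fun n : ℕ => 2 * (1 / ((n - 1 : ℕ) : ℝ) ^ 2) := by
    refine Summable.mul_left 2 ((summable_nat_add_iff 1).mp ?_)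
    simpa only [Nat.add_sub_cancel] using Real.summable_one_div_nat_pow.mpr one_lt_two
  refine summable_shift.of_nonneg_of_le (fun n => by positivity) fun n => ?_
  have ratio_le_two : ((2 * n - 1 : ℕ) : ℝ) / n ≤ 2 :=
    div_le_of_le_mul₀ n.cast_nonneg zero_le_two (mod_cast Nat.sub_le _ _)
  rw [← div_div, div_eq_mul_one_div]
  gcongr

/-- The combinatorial series `∑_{n₁+n₂ ≥ 2} ((2n₁)!(2n₂)!)/(4^n (n₁!)²(n₂!)²) ·
(2n−1)/(n(n−1)²)` (with `n = n₁ + n₂`) is convergent. -/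
theorem series_summable :
    Summable (fun q : ℕ × ℕ =>
      if 2 ≤ q.1 + q.2 then
        (((2 * q.1).factorial * (2 * q.2).factorial : ℕ) : ℝ) /
            (4 ^ (q.1 + q.2) * ((q.1.factorial : ℝ)) ^ 2 * ((q.2.factorial : ℝ)) ^ 2) *
          (((2 * (q.1 + q.2) - 1 : ℕ) : ℝ) /
            ((q.1 + q.2 : ℕ) * (((q.1 + q.2 - 1 : ℕ) : ℝ)) ^ 2))
      else 0) := by
  have summable_on_ge_two := summable_two_mul_sub_one_div_mul_sub_one_sq.indicator {n | 2 ≤ n}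
  refine (summable_centralBinom_mul_centralBinom_div_mul_iff.mpr summable_on_ge_two).congr
    fun q => ?_
  simp only [Set.indicator_apply, Set.mem_ofPred_eq, mul_ite, mul_zero]
  congr 1
  rw [cast_centralBinom_eq_div ℝ, cast_centralBinom_eq_div ℝ, Nat.cast_mul]
  congr 1
  field_simp
end

section
/- Let T > 0. For Λ > 0, an integer n ≥ 1, and (u₁,…,u_{2n}) ∈ [0,T]^{2n} with u := min(u₁,…,u_{2n}) and v := max(u₁,…,u_{2n}), define R_{n,Λ}(u₁,…,u_{2n}) := ∫∫_{{(t₁,t₂) : 0 ≤ t₁ ≤ u, v ≤ t₂ ≤ T, t₂ − t₁ ≤ Λ}} (t₂ − t₁)^(−(1+n)) dt₁ dt₂. Then there exists a constant C > 0 (depending only on T) such that for every Λ with 0 < Λ ≤ min(T,1)/2: Σ_{(n₁,n₂) ∈ ℕ₀², n₁+n₂ ≥ 1} ((2n₁)! (2n₂)!) / ((2π)² · 4^(n₁+n₂) · (n₁! n₂!)²) · ‖R_{n₁+n₂,Λ}‖²_{L²([0,T]^{2(n₁+n₂)})} ≤ C · Λ · (ln Λ)². -/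
open MeasureTheory Real ENNReal

/-!
Write `R n` for the gap kernel in `2 n` variables. By Tonelli, `‖R n‖²` is at most the integral over
pairs of short intervals `t = [t₁, t₂]` and `s = [s₁, s₂]` of `(τ σ)⁻ⁿ⁻¹ d²ⁿ`, where `τ` and `σ` are
their lengths and `d` is the length of the overlap. The chaos coefficients of total degree `n` add
up to `1 / (2 π)²`, whatever `n` is, so the sum over the degrees is the geometric series of ratio
`d² / (τ σ)`. It is at most `1 / (τ (|t₁ - s₁| + |t₂ - s₂|))` when `τ` is the larger length, and
AM-GM bounds this by the product `1 / (2 τ |t₁ - s₁|^(1/2) |t₂ - s₂|^(1/2))`, whose integral over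
the `s` with both endpoints within `τ` of those of `t` does not depend on `t`. The whole sum is
therefore at most a constant times the area of the set of short intervals, which is at most `T Λ`,
and `(log Λ)²` is bounded below for `Λ ≤ 1/2`.
-/

open Finset.HasAntidiagonal (antidiagonal mem_antidiagonal)

/-! ### Chaos coefficients -/

lemma choose_neg_half (n : ℕ) :
    Ring.choose (-1 / 2 : ℝ) n = (-1 / 4) ^ n * n.centralBinom := by
  induction n with
  | zero => simp
  | succ n ih =>
    have hdesc : Ring.choose (-1 / 2 : ℝ) (n + 1) * (n + 1) =
        Ring.choose (-1 / 2 : ℝ) n * (-1 / 2 - n) := by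
      simp only [Ring.choose_eq_smul, descPochhammer_succ_right, Polynomial.smeval_mul,
        Polynomial.smeval_sub, Polynomial.smeval_X, Polynomial.smeval_natCast, smul_eq_mul,
        Nat.factorial_succ, pow_one, pow_zero, nsmul_eq_mul]
      push_cast
      field_simp
    have hcentral : ((n : ℝ) + 1) * (n + 1).centralBinom = 2 * (2 * n + 1) * n.centralBinom :=
      mod_cast n.succ_mul_centralBinom_succ
    refine mul_right_cancel₀ (b := (n : ℝ) + 1) (by positivity) ?_
    rw [hdesc, ih, pow_succ]
    linear_combination (-1 / 4) ^ n / 4 * hcentral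

-- The square of the generating function `(1 - 4 X) ^ (-1 / 2)` is geometric.
lemma sum_antidiagonal_centralBinom_mul (n : ℕ) :
    ∑ q ∈ antidiagonal n, (q.1.centralBinom * q.2.centralBinom : ℝ) = 4 ^ n := by
  have hvandermonde := Ring.add_choose_eq n (Commute.all (-1 / 2 : ℝ) (-1 / 2))
  have hneg_one : Ring.choose (-1 / 2 + -1 / 2 : ℝ) n = (-1) ^ n := by
    rw [show (-1 / 2 + -1 / 2 : ℝ) = -1 by norm_num, Ring.choose_neg', Ring.multichoose_one]
    simp [Int.negOnePow_def, Units.smul_def]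
  have hterm : ∀ q ∈ antidiagonal n, Ring.choose (-1 / 2 : ℝ) q.1 * Ring.choose (-1 / 2 : ℝ) q.2 =
      (-1 / 4) ^ n * (q.1.centralBinom * q.2.centralBinom) := by
    intro q hq
    rw [choose_neg_half, choose_neg_half, ← mem_antidiagonal.mp hq, pow_add]
    ring
  rw [hneg_one, Finset.sum_congr rfl hterm, ← Finset.mul_sum] at hvandermonde
  refine mul_left_cancel₀ (a := (-1 / 4 : ℝ) ^ n) (by positivity) ?_
  rw [← hvandermonde, ← mul_pow]
  norm_num

lemma factorial_two_mul_eq_centralBinom_mul (n : ℕ) :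
    (2 * n).factorial = n.centralBinom * n.factorial ^ 2 := by
  rw [sq, ← mul_assoc, Nat.centralBinom, two_mul, Nat.add_choose_mul_factorial_mul_factorial]

/-- The weight `(2n₁)! (2n₂)! ((2π)⁻¹ (-1/2)^(n₁+n₂) / (n₁! n₂!))²` of `‖R_{n₁+n₂,Λ}‖²` in the chaos
expansion, where `q = (n₁, n₂)`. -/
noncomputable def chaosCoeff (q : ℕ × ℕ) : ℝ :=
  (((2 * q.1).factorial * (2 * q.2).factorial : ℕ) : ℝ) /
    ((2 * π) ^ 2 * 4 ^ (q.1 + q.2) * ((q.1.factorial * q.2.factorial : ℕ) : ℝ) ^ 2)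

lemma chaosCoeff_nonneg (q : ℕ × ℕ) : 0 ≤ chaosCoeff q := by
  unfold chaosCoeff
  positivity

lemma chaosCoeff_eq_centralBinom (q : ℕ × ℕ) :
    chaosCoeff q =
      q.1.centralBinom * q.2.centralBinom / ((2 * π) ^ 2 * 4 ^ (q.1 + q.2)) := by
  rw [chaosCoeff, factorial_two_mul_eq_centralBinom_mul, factorial_two_mul_eq_centralBinom_mul]
  push_cast
  field_simp

lemma sum_antidiagonal_chaosCoeff (n : ℕ) :
    ∑ q ∈ antidiagonal n, chaosCoeff q = 1 / (2 * π) ^ 2 := by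
  have hterm : ∀ q ∈ antidiagonal n, chaosCoeff q =
      q.1.centralBinom * q.2.centralBinom / ((2 * π) ^ 2 * 4 ^ n) := fun q hq => by
    rw [chaosCoeff_eq_centralBinom, mem_antidiagonal.mp hq]
  rw [Finset.sum_congr rfl hterm, ← Finset.sum_div, sum_antidiagonal_centralBinom_mul]
  field_simp

lemma tsum_mul_apply_add {A : Type*} [AddMonoid A] [Finset.HasAntidiagonal A]
    (c : A × A → ℝ≥0∞) (f : A → ℝ≥0∞) :
    ∑' q : A × A, c q * f (q.1 + q.2) = ∑' a, (∑ q ∈ antidiagonal a, c q) * f a := by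
  rw [← Finset.HasAntidiagonal.sigmaAntidiagonalEquivProd.tsum_eq, ENNReal.tsum_sigma']
  refine tsum_congr fun a => ?_
  rw [Finset.sum_mul, ← Finset.tsum_subtype]
  exact tsum_congr fun q => by simp [mem_antidiagonal.mp q.2]

/-! ### Iterated Lebesgue integrals -/

lemma lintegral_sq_lintegral {α β : Type*} [MeasurableSpace α] [MeasurableSpace β]
    {μ : Measure α} {ν : Measure β} [SFinite μ] [SFinite ν] {F : β → α → ℝ≥0∞}
    (hF : Measurable (Function.uncurry F)) :
    ∫⁻ x, (∫⁻ t, F x t ∂μ) ^ 2 ∂ν = ∫⁻ t, ∫⁻ s, ∫⁻ x, F x t * F x s ∂ν ∂μ ∂μ := by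
  have hsq (x : β) : (∫⁻ t, F x t ∂μ) ^ 2 = ∫⁻ t, ∫⁻ s, F x t * F x s ∂μ ∂μ := by
    have hFx : Measurable (F x) := hF.comp measurable_prodMk_left
    simp_rw [lintegral_const_mul _ hFx]
    rw [lintegral_mul_const _ hFx, sq]
  have htriple : Measurable fun p : (β × α) × α => F p.1.1 p.1.2 * F p.1.1 p.2 :=
    (hF.comp measurable_fst).mul
      (hF.comp ((measurable_fst.comp measurable_fst).prodMk measurable_snd))
  simp_rw [hsq]
  rw [lintegral_lintegral_swap htriple.lintegral_prod_right'.aemeasurable]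
  refine lintegral_congr fun t => lintegral_lintegral_swap ?_
  exact (htriple.comp ((measurable_fst.prodMk measurable_const).prodMk
    measurable_snd)).aemeasurable

lemma lintegral_lintegral_le_of_le_add_swap {α : Type*} [MeasurableSpace α] {μ : Measure α}
    [SFinite μ] {K M : α → α → ℝ≥0∞} {c : ℝ≥0∞} (hM : Measurable (Function.uncurry M))
    (hK : ∀ t s, K t s ≤ M t s + M s t) (hc : ∀ t, ∫⁻ s, M t s ∂μ ≤ c) :
    ∫⁻ t, ∫⁻ s, K t s ∂μ ∂μ ≤ 2 * c * μ Set.univ :=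
  calc ∫⁻ t, ∫⁻ s, K t s ∂μ ∂μ
    _ ≤ ∫⁻ t, ∫⁻ s, (M t s + M s t) ∂μ ∂μ := lintegral_mono fun t => lintegral_mono (hK t)
    _ = ∫⁻ t, ∫⁻ s, M t s ∂μ ∂μ + ∫⁻ t, ∫⁻ s, M s t ∂μ ∂μ := by
        rw [← lintegral_add_left hM.lintegral_prod_right]
        exact lintegral_congr fun t => lintegral_add_left (hM.comp measurable_prodMk_left) _
    _ = 2 * ∫⁻ t, ∫⁻ s, M t s ∂μ ∂μ := by
        rw [lintegral_lintegral_swap hM.aemeasurable, two_mul]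
    _ ≤ 2 * ∫⁻ _, c ∂μ := by gcongr with t; exact hc t
    _ = 2 * c * μ Set.univ := by rw [lintegral_const, mul_assoc]

lemma lintegral_comp_abs (f : ℝ → ℝ≥0∞) :
    ∫⁻ x, f |x| = 2 * ∫⁻ x in Set.Ioi 0, f x := by
  have hpos : ∫⁻ x in Set.Ioi 0, f |x| = ∫⁻ x in Set.Ioi 0, f x :=
    setLIntegral_congr_fun measurableSet_Ioi fun x hx => by rw [abs_of_pos hx]
  have hneg : ∫⁻ x in Set.Iic 0, f |x| = ∫⁻ x in Set.Ioi 0, f |x| := by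
    rw [restrict_Ioi_eq_restrict_Ici, ← neg_zero,
      ← (Measure.measurePreserving_neg (volume : Measure ℝ)).setLIntegral_comp_preimage_emb
        (MeasurableEquiv.neg ℝ).measurableEmbedding]
    simp
  rw [← lintegral_add_compl _ measurableSet_Iic (μ := volume) (A := Set.Iic (0 : ℝ)), Set.compl_Iic,
    hneg, hpos, two_mul]

lemma lintegral_Ioc_ofReal_rpow {r p : ℝ} (hr : 0 ≤ r) (hp : -1 < p) :
    ∫⁻ x in Set.Ioc 0 r, ENNReal.ofReal x ^ p = ENNReal.ofReal (r ^ (p + 1) / (p + 1)) := by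
  have hint : IntegrableOn (fun x : ℝ => x ^ p) (Set.Ioc 0 r) :=
    (intervalIntegrable_iff_integrableOn_Ioc_of_le hr).1
      (intervalIntegral.intervalIntegrable_rpow' hp)
  calc ∫⁻ x in Set.Ioc 0 r, ENNReal.ofReal x ^ p
    _ = ∫⁻ x in Set.Ioc 0 r, ENNReal.ofReal (x ^ p) :=
        setLIntegral_congr_fun measurableSet_Ioc fun x hx => ENNReal.ofReal_rpow_of_pos hx.1
    _ = ENNReal.ofReal (∫ x in Set.Ioc 0 r, x ^ p) :=
        (ofReal_integral_eq_lintegral_ofReal hint <| (ae_restrict_mem measurableSet_Ioc).mono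
          fun x hx => Real.rpow_nonneg hx.1.le p).symm
    _ = ENNReal.ofReal (r ^ (p + 1) / (p + 1)) := by
        rw [← intervalIntegral.integral_of_le hr, integral_rpow (Or.inl hp),
          Real.zero_rpow (by linarith), sub_zero]

lemma lintegral_closedBall_edist_rpow (x : ℝ) {r p : ℝ} (hr : 0 ≤ r) (hp : -1 < p) :
    ∫⁻ y in Metric.closedBall x r, edist y x ^ p =
      2 * ENNReal.ofReal (r ^ (p + 1) / (p + 1)) := by
  let f : ℝ → ℝ≥0∞ := (Set.Iic r).indicator fun u => ENNReal.ofReal u ^ p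
  have hf (y : ℝ) : (Metric.closedBall x r).indicator (fun y => edist y x ^ p) y = f |y - x| := by
    simp only [f, Set.indicator, Metric.mem_closedBall, Real.dist_eq, Set.mem_Iic, edist_dist]
  rw [← lintegral_indicator Metric.isClosed_closedBall.measurableSet, lintegral_congr hf,
    lintegral_sub_right_eq_self (fun z => f |z|), lintegral_comp_abs,
    setLIntegral_indicator measurableSet_Iic, Set.inter_comm, Set.Ioi_inter_Iic,
    lintegral_Ioc_ofReal_rpow hr hp]

/-! ### Overlapping intervals -/

/-- The signed length of `[t₁, t₂] ∩ [s₁, s₂]`, negative when the intervals are separated. -/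
noncomputable def overlap (t s : ℝ × ℝ) : ℝ := min t.2 s.2 - max t.1 s.1

lemma overlap_comm (t s : ℝ × ℝ) : overlap t s = overlap s t := by
  simp only [overlap, min_comm, max_comm]

section Geometry

variable {t s : ℝ × ℝ}

lemma overlap_mul_max_le (ht : t.1 ≤ t.2) (hs : s.1 ≤ s.2) :
    overlap t s * max (t.2 - t.1) (s.2 - s.1) ≤ (t.2 - t.1) * (s.2 - s.1) := by
  have hleft : overlap t s ≤ t.2 - t.1 := sub_le_sub (min_le_left _ _) (le_max_left _ _)
  have hright : overlap t s ≤ s.2 - s.1 := sub_le_sub (min_le_right _ _) (le_max_right _ _)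
  rcases max_cases (t.2 - t.1) (s.2 - s.1) with ⟨hmax, _⟩ | ⟨hmax, _⟩ <;> rw [hmax] <;> nlinarith

lemma overlap_mul_dist_add_dist_le (h : 0 ≤ overlap t s) :
    overlap t s * (dist s.1 t.1 + dist s.2 t.2) ≤
      (t.2 - t.1) * (s.2 - s.1) - overlap t s ^ 2 := by
  simp only [overlap, Real.dist_eq] at h ⊢
  rcases le_total t.1 s.1 with h₁ | h₁ <;> rcases le_total t.2 s.2 with h₂ | h₂ <;>
    simp only [h₁, h₂, max_eq_left, max_eq_right, min_eq_left, min_eq_right, abs_of_nonneg,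
      abs_of_nonpos, sub_nonneg, sub_nonpos] at h ⊢ <;> nlinarith

lemma dist_le_max_of_overlap_nonneg (h : 0 ≤ overlap t s) :
    dist s t ≤ max (t.2 - t.1) (s.2 - s.1) := by
  have hmeet : max t.1 s.1 ≤ min t.2 s.2 := sub_nonneg.1 h
  simp only [max_le_iff, le_min_iff] at hmeet
  rw [Prod.dist_eq, Real.dist_eq, Real.dist_eq, max_le_iff, abs_le', abs_le']
  simp only [le_max_iff]
  grind

lemma max_mul_dist_add_dist_mul_overlap_sq_le (ht : t.1 ≤ t.2) (hs : s.1 ≤ s.2)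
    (h : 0 ≤ overlap t s) :
    max (t.2 - t.1) (s.2 - s.1) * (dist s.1 t.1 + dist s.2 t.2) * overlap t s ^ 2 ≤
      (t.2 - t.1) * (s.2 - s.1) * ((t.2 - t.1) * (s.2 - s.1) - overlap t s ^ 2) :=
  calc max (t.2 - t.1) (s.2 - s.1) * (dist s.1 t.1 + dist s.2 t.2) * overlap t s ^ 2
    _ = (overlap t s * max (t.2 - t.1) (s.2 - s.1)) *
          (overlap t s * (dist s.1 t.1 + dist s.2 t.2)) := by ring
    _ ≤ _ := mul_le_mul (overlap_mul_max_le ht hs) (overlap_mul_dist_add_dist_le h) (by positivity)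
        (mul_nonneg (sub_nonneg.2 ht) (sub_nonneg.2 hs))

end Geometry

section Cube

variable {ι : Type*}

variable (ι) in
/-- The points of `ℝ^ι` whose coordinates all lie in the interval `[t₁, t₂]`: the variables for
which `t` contributes to the gap kernel. -/
def cube (t : ℝ × ℝ) : Set (ι → ℝ) := Set.Icc (fun _ => t.1) (fun _ => t.2)

lemma measurableSet_mem_cube [Countable ι] :
    MeasurableSet {p : (ι → ℝ) × (ℝ × ℝ) | p.1 ∈ cube ι p.2} := by
  simp only [cube, Set.mem_Icc, Pi.le_def]
  measurability

lemma measurableSet_cube [Countable ι] (t : ℝ × ℝ) : MeasurableSet (cube ι t) :=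
  measurableSet_Icc

lemma mem_cube_iff_le_iInf_and_iSup_le [Finite ι] [Nonempty ι] {x : ι → ℝ} {t : ℝ × ℝ} :
    x ∈ cube ι t ↔ t.1 ≤ ⨅ i, x i ∧ ⨆ i, x i ≤ t.2 := by
  rw [le_ciInf_iff (Set.finite_range x).bddBelow, ciSup_le_iff (Set.finite_range x).bddAbove]
  rfl

variable [Fintype ι]

lemma volume_cube_inter_cube (t s : ℝ × ℝ) :
    volume (cube ι t ∩ cube ι s) = ENNReal.ofReal (overlap t s) ^ Fintype.card ι := by
  rw [cube, cube, Set.Icc_inter_Icc, Real.volume_Icc_pi]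
  simp [overlap]

lemma lintegral_sq_setLIntegral_mem_cube {μ : Measure (ℝ × ℝ)} [SFinite μ] {f : ℝ × ℝ → ℝ≥0∞}
    (hf : Measurable f) :
    ∫⁻ x : ι → ℝ, (∫⁻ t in {t | x ∈ cube ι t}, f t ∂μ) ^ 2 =
      ∫⁻ t, ∫⁻ s, f t * f s * ENNReal.ofReal (overlap t s) ^ Fintype.card ι ∂μ ∂μ := by
  let F : (ι → ℝ) → ℝ × ℝ → ℝ≥0∞ := fun x => {t | x ∈ cube ι t}.indicator f
  have hF : Measurable (Function.uncurry F) :=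
    (hf.comp measurable_snd).indicator measurableSet_mem_cube
  have hF_mul (t s : ℝ × ℝ) (x : ι → ℝ) :
      F x t * F x s = (cube ι t ∩ cube ι s).indicator (fun _ => f t * f s) x := by
    by_cases ht : x ∈ cube ι t <;> by_cases hs : x ∈ cube ι s <;> simp [F, ht, hs]
  calc ∫⁻ x : ι → ℝ, (∫⁻ t in {t | x ∈ cube ι t}, f t ∂μ) ^ 2
    _ = ∫⁻ x, (∫⁻ t, F x t ∂μ) ^ 2 := lintegral_congr fun x => by
        have hx : MeasurableSet {t | x ∈ cube ι t} :=
          measurableSet_mem_cube.preimage measurable_prodMk_left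
        rw [lintegral_indicator hx]
    _ = ∫⁻ t, ∫⁻ s, ∫⁻ x, F x t * F x s ∂volume ∂μ ∂μ := lintegral_sq_lintegral hF
    _ = _ := by
        simp_rw [hF_mul, lintegral_indicator_const
          ((measurableSet_cube _).inter (measurableSet_cube _)), volume_cube_inter_cube]

end Cube

/-! ### The energy of the gap kernel -/

/-- The kernel `(τ σ)⁻ⁿ⁻¹ d²ⁿ` of the energy of `R_{n,Λ}`, for intervals of lengths `τ` and `σ` and
overlap `d`. The inverse is that of `ℝ≥0∞`, which is `∞` at `0`, so that bounds on the kernel need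
no exception for degenerate intervals. -/
noncomputable def overlapKernel (n : ℕ) (t s : ℝ × ℝ) : ℝ≥0∞ :=
  ((ENNReal.ofReal (t.2 - t.1))⁻¹ * (ENNReal.ofReal (s.2 - s.1))⁻¹) ^ (n + 1) *
    ENNReal.ofReal (overlap t s) ^ (2 * n)

lemma measurable_overlapKernel (n : ℕ) : Measurable (Function.uncurry (overlapKernel n)) := by
  unfold Function.uncurry overlapKernel overlap
  fun_prop

lemma overlapKernel_comm (n : ℕ) (t s : ℝ × ℝ) : overlapKernel n t s = overlapKernel n s t := by
  rw [overlapKernel, overlapKernel, overlap_comm, mul_comm (ENNReal.ofReal (t.2 - t.1))⁻¹]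

lemma overlapKernel_eq_zero_of_overlap_nonpos {n : ℕ} {t s : ℝ × ℝ} (hn : n ≠ 0)
    (h : overlap t s ≤ 0) :
    overlapKernel n t s = 0 := by
  simp [overlapKernel, ENNReal.ofReal_eq_zero.2 h, hn]

lemma enorm_rpow_neg_one_add_le {x : ℝ} (hx : 0 ≤ x) (n : ℕ) :
    ‖x ^ (-(1 + n : ℝ))‖ₑ ≤ (ENNReal.ofReal x)⁻¹ ^ (n + 1) := by
  have hpow : x ^ (-(1 + n : ℝ)) = (x⁻¹) ^ (n + 1) := by
    rw [Real.rpow_neg hx, add_comm, ← Nat.cast_succ, Real.rpow_natCast, inv_pow]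
  rw [hpow, enorm_pow, Real.enorm_eq_ofReal (inv_nonneg.2 hx)]
  gcongr
  exact ENNReal.ofReal_inv_le

section GapKernel

variable (T Λ : ℝ)

/-- The kernel `R_{n,Λ}` on `[0,T]`, for any family of variables `x` in place of `2n` of them. -/
noncomputable def gapKernel {ι : Type*} (n : ℕ) (x : ι → ℝ) : ℝ :=
  ∫ t in {t : ℝ × ℝ | 0 ≤ t.1 ∧ t.1 ≤ (⨅ i, x i) ∧ (⨆ i, x i) ≤ t.2 ∧ t.2 ≤ T ∧ t.2 - t.1 ≤ Λ},
    (t.2 - t.1) ^ (-(1 + n : ℝ))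

/-- The subintervals `[t₁, t₂]` of `[0,T]` of length at most the gap `Λ`. -/
def gapRegion : Set (ℝ × ℝ) := {t | 0 ≤ t.1 ∧ t.1 ≤ t.2 ∧ t.2 ≤ T ∧ t.2 - t.1 ≤ Λ}

/-- The Tonelli form of `‖R_{n,Λ}‖²`, as a double integral over pairs of intervals. -/
noncomputable def gapEnergy (n : ℕ) : ℝ≥0∞ :=
  ∫⁻ t in gapRegion T Λ, ∫⁻ s in gapRegion T Λ, overlapKernel n t s

lemma measurableSet_gapRegion : MeasurableSet (gapRegion T Λ) :=
  (measurableSet_le measurable_const measurable_fst).inter <|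
    (measurableSet_le measurable_fst measurable_snd).inter <|
      (measurableSet_le measurable_snd measurable_const).inter <|
        measurableSet_le (measurable_snd.sub measurable_fst) measurable_const

lemma volume_gapRegion_le :
    volume (gapRegion T Λ) ≤ ENNReal.ofReal T * ENNReal.ofReal Λ := by
  have hsub : gapRegion T Λ ⊆
      (fun t : ℝ × ℝ => (t.1, t.2 - t.1)) ⁻¹' (Set.Icc 0 T ×ˢ Set.Icc 0 Λ) :=
    fun t ⟨h₀, hle, hT, hΛ⟩ => ⟨⟨h₀, hle.trans hT⟩, sub_nonneg.2 hle, hΛ⟩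
  refine (measure_mono hsub).trans_eq ?_
  rw [Measure.volume_eq_prod, (measurePreserving_prod_sub volume volume).measure_preimage
    (measurableSet_Icc.prod measurableSet_Icc).nullMeasurableSet, Measure.prod_prod]
  simp

variable {T Λ}

lemma enorm_gapKernel_le {ι : Type*} [Finite ι] [Nonempty ι] (n : ℕ) (x : ι → ℝ) :
    ‖gapKernel T Λ n x‖ₑ ≤
      ∫⁻ t in {t | x ∈ cube ι t}, (ENNReal.ofReal (t.2 - t.1))⁻¹ ^ (n + 1)
        ∂volume.restrict (gapRegion T Λ) := by
  have hset : {t : ℝ × ℝ | 0 ≤ t.1 ∧ t.1 ≤ (⨅ i, x i) ∧ (⨆ i, x i) ≤ t.2 ∧ t.2 ≤ T ∧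
      t.2 - t.1 ≤ Λ} ⊆ {t | x ∈ cube ι t} ∩ gapRegion T Λ :=
    fun t ⟨ht₀, ht₁, ht₂, htT, htΛ⟩ =>
      ⟨mem_cube_iff_le_iInf_and_iSup_le.2 ⟨ht₁, ht₂⟩, ht₀,
        ht₁.trans ((ciInf_le_ciSup (Set.finite_range x).bddBelow
          (Set.finite_range x).bddAbove).trans ht₂), htT, htΛ⟩
  have hcube : MeasurableSet {t | x ∈ cube ι t} :=
    measurableSet_mem_cube.preimage measurable_prodMk_left
  rw [Measure.restrict_restrict hcube]
  calc ‖gapKernel T Λ n x‖ₑ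
    _ ≤ _ := enorm_integral_le_lintegral_enorm _
    _ ≤ ∫⁻ t in {t | x ∈ cube ι t} ∩ gapRegion T Λ, ‖(t.2 - t.1) ^ (-(1 + n : ℝ))‖ₑ :=
        lintegral_mono_set hset
    _ ≤ _ := setLIntegral_mono' (hcube.inter (measurableSet_gapRegion T Λ)) fun t ht =>
        enorm_rpow_neg_one_add_le (sub_nonneg.2 ht.2.2.1) n

lemma setLIntegral_gapKernel_sq_le {n : ℕ} (hn : n ≠ 0) (A : Set (Fin (2 * n) → ℝ)) :
    ∫⁻ x in A, ENNReal.ofReal (gapKernel T Λ n x ^ 2) ≤ gapEnergy T Λ n := by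
  have : NeZero (2 * n) := ⟨by positivity⟩
  calc ∫⁻ x in A, ENNReal.ofReal (gapKernel T Λ n x ^ 2)
    _ ≤ ∫⁻ x, ‖gapKernel T Λ n x‖ₑ ^ 2 := by
        refine (setLIntegral_le_lintegral _ _).trans_eq (lintegral_congr fun x => ?_)
        rw [← enorm_pow, Real.enorm_eq_ofReal (sq_nonneg _)]
    _ ≤ _ := lintegral_mono fun x => pow_le_pow_left₀ zero_le (enorm_gapKernel_le n x) 2
    _ = gapEnergy T Λ n := by
        rw [lintegral_sq_setLIntegral_mem_cube (by fun_prop)]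
        simp only [gapEnergy, overlapKernel, mul_pow, Fintype.card_fin]

end GapKernel

/-! ### Summation over the degrees -/

lemma inv_add_le_rpow_neg_half_mul_rpow_neg_half (a b : NNReal) :
    (a + b : ℝ≥0∞)⁻¹ ≤ 2⁻¹ * ((a : ℝ≥0∞) ^ (-1 / 2 : ℝ) * (b : ℝ≥0∞) ^ (-1 / 2 : ℝ)) := by
  have ham_gm : 2 * (a ^ (1 / 2 : ℝ) * b ^ (1 / 2 : ℝ)) ≤ a + b := by
    have h := two_mul_le_add_sq (a ^ (1 / 2 : ℝ)) (b ^ (1 / 2 : ℝ))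
    rw [← mul_assoc]
    simpa only [← NNReal.sqrt_eq_rpow, NNReal.sq_sqrt] using h
  have hcast (c : NNReal) : (c : ℝ≥0∞) ^ (-1 / 2 : ℝ) = ((c ^ (1 / 2 : ℝ) : NNReal) : ℝ≥0∞)⁻¹ := by
    rw [neg_div, ENNReal.rpow_neg, ENNReal.coe_rpow_of_nonneg _ (by norm_num)]
  rw [hcast, hcast, ← ENNReal.mul_inv (by simp) (by simp), ← ENNReal.mul_inv (by simp) (by simp),
    ENNReal.inv_le_inv]
  exact_mod_cast ham_gm

lemma tsum_overlapKernel_eq (t s : ℝ × ℝ) :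
    ∑' n, overlapKernel (n + 1) t s =
      (ENNReal.ofReal (t.2 - t.1))⁻¹ * (ENNReal.ofReal (s.2 - s.1))⁻¹ *
        (ENNReal.ofReal (overlap t s) ^ 2 *
          ((ENNReal.ofReal (t.2 - t.1))⁻¹ * (ENNReal.ofReal (s.2 - s.1))⁻¹)) *
        (1 - ENNReal.ofReal (overlap t s) ^ 2 *
          ((ENNReal.ofReal (t.2 - t.1))⁻¹ * (ENNReal.ofReal (s.2 - s.1))⁻¹))⁻¹ := by
  rw [mul_assoc, ← ENNReal.tsum_geometric_add_one, ← ENNReal.tsum_mul_left]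
  refine tsum_congr fun n => ?_
  rw [overlapKernel]
  ring

lemma tsum_overlapKernel_le_inv_mul_inv {t s : ℝ × ℝ} (h : 0 < overlap t s) :
    ∑' n, overlapKernel (n + 1) t s ≤
      (ENNReal.ofReal (max (t.2 - t.1) (s.2 - s.1)))⁻¹ *
        (edist s.1 t.1 + edist s.2 t.2)⁻¹ := by
  have hmeet : max t.1 s.1 < min t.2 s.2 := sub_pos.1 h
  obtain ⟨⟨ht, -⟩, -, hs⟩ : (t.1 < t.2 ∧ s.1 < t.2) ∧ t.1 < s.2 ∧ s.1 < s.2 := by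
    simpa only [max_lt_iff, lt_min_iff] using hmeet
  have hτ : 0 < t.2 - t.1 := sub_pos.2 ht
  have hσ : 0 < s.2 - s.1 := sub_pos.2 hs
  set p := ((t.2 - t.1) * (s.2 - s.1))⁻¹ with hp_def
  have hp : (ENNReal.ofReal (t.2 - t.1))⁻¹ * (ENNReal.ofReal (s.2 - s.1))⁻¹ = ENNReal.ofReal p := by
    rw [← ENNReal.ofReal_inv_of_pos hτ, ← ENNReal.ofReal_inv_of_pos hσ,
      ← ENNReal.ofReal_mul (by positivity), hp_def, mul_inv]
  have hratio : p * (overlap t s ^ 2 * p) *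
      (max (t.2 - t.1) (s.2 - s.1) * (dist s.1 t.1 + dist s.2 t.2)) ≤ 1 - overlap t s ^ 2 * p := by
    have hgeom := max_mul_dist_add_dist_mul_overlap_sq_le ht.le hs.le h.le
    rw [hp_def]
    field_simp
    linarith
  rw [tsum_overlapKernel_eq, hp, ← ENNReal.mul_inv (by simp) (by simp),
    ENNReal.le_inv_iff_mul_le, mul_right_comm, ← div_eq_mul_inv]
  refine ENNReal.div_le_of_le_mul ?_
  rw [one_mul, edist_dist, edist_dist, ← ENNReal.ofReal_add dist_nonneg dist_nonneg,
    ← ENNReal.ofReal_mul (by positivity), ← ENNReal.ofReal_pow h.le,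
    ← ENNReal.ofReal_mul (by positivity), ← ENNReal.ofReal_mul (by positivity),
    ← ENNReal.ofReal_mul (by positivity), ← ENNReal.ofReal_one,
    ← ENNReal.ofReal_sub _ (by positivity)]
  exact ENNReal.ofReal_le_ofReal hratio

/-- An integrable bound, where `t` is the longer interval, for the sum over `n ≥ 1` of
`overlapKernel n t s`. The ball is that of the sup norm, that is, both endpoints of `s` are within
the length of `t` of those of `t`. -/
noncomputable def gapMajorant (t s : ℝ × ℝ) : ℝ≥0∞ :=
  (Metric.closedBall t (t.2 - t.1)).indicator
    (fun s => (2 * ENNReal.ofReal (t.2 - t.1))⁻¹ *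
      (edist s.1 t.1 ^ (-1 / 2 : ℝ) * edist s.2 t.2 ^ (-1 / 2 : ℝ))) s

lemma measurable_gapMajorant : Measurable (Function.uncurry gapMajorant) := by
  have hball : MeasurableSet {p : (ℝ × ℝ) × ℝ × ℝ | dist p.2 p.1 ≤ p.1.2 - p.1.1} :=
    measurableSet_le (by fun_prop) (by fun_prop)
  have hsingular : Measurable fun p : (ℝ × ℝ) × ℝ × ℝ => (2 * ENNReal.ofReal (p.1.2 - p.1.1))⁻¹ *
      (edist p.2.1 p.1.1 ^ (-1 / 2 : ℝ) * edist p.2.2 p.1.2 ^ (-1 / 2 : ℝ)) := by fun_prop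
  exact hsingular.indicator hball

lemma lintegral_gapMajorant_le (t : ℝ × ℝ) : ∫⁻ s, gapMajorant t s ≤ 8 := by
  unfold gapMajorant
  rw [lintegral_indicator Metric.isClosed_closedBall.measurableSet]
  rcases lt_or_ge (t.2 - t.1) 0 with hτ | hτ
  · simp [Metric.closedBall_eq_empty.2 hτ]
  have hmeas (u : ℝ) : Measurable fun v : ℝ => edist v u ^ (-1 / 2 : ℝ) := by fun_prop
  rw [lintegral_const_mul _ (by fun_prop), ← Prod.mk.eta (p := t), ← closedBall_prod_same,
    Measure.volume_eq_prod, ← Measure.prod_restrict,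
    lintegral_prod_mul (hmeas _).aemeasurable (hmeas _).aemeasurable,
    lintegral_closedBall_edist_rpow _ hτ (by norm_num),
    lintegral_closedBall_edist_rpow _ hτ (by norm_num)]
  have hsqrt : ENNReal.ofReal ((t.2 - t.1) ^ (-1 / 2 + 1 : ℝ) / (-1 / 2 + 1)) ^ 2 =
      4 * ENNReal.ofReal (t.2 - t.1) := by
    rw [← ENNReal.ofReal_pow (by positivity), div_pow, show (-1 / 2 + 1 : ℝ) = 1 / 2 by norm_num,
      ← Real.sqrt_eq_rpow, Real.sq_sqrt hτ, ← ENNReal.ofReal_ofNat, ← ENNReal.ofReal_mul (by simp)]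
    ring_nf
  rw [← sq, mul_pow, hsqrt]
  calc (2 * ENNReal.ofReal (t.2 - t.1))⁻¹ * (2 ^ 2 * (4 * ENNReal.ofReal (t.2 - t.1)))
    _ = 8 * (2 * ENNReal.ofReal (t.2 - t.1) * (2 * ENNReal.ofReal (t.2 - t.1))⁻¹) := by ring
    _ ≤ 8 := mul_le_of_le_one_right' (ENNReal.mul_inv_le_one _)

lemma tsum_overlapKernel_le_gapMajorant_of_length_le {t s : ℝ × ℝ} (hlen : s.2 - s.1 ≤ t.2 - t.1) :
    ∑' n, overlapKernel (n + 1) t s ≤ gapMajorant t s := by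
  rcases le_or_gt (overlap t s) 0 with h | h
  · simp [overlapKernel_eq_zero_of_overlap_nonpos, h]
  have hmem : s ∈ Metric.closedBall t (t.2 - t.1) :=
    (dist_le_max_of_overlap_nonneg h.le).trans_eq (max_eq_left hlen)
  rw [gapMajorant, Set.indicator_of_mem hmem]
  refine (tsum_overlapKernel_le_inv_mul_inv h).trans ?_
  rw [max_eq_left hlen, ENNReal.mul_inv (by simp) (by simp), mul_comm 2⁻¹, mul_assoc,
    edist_nndist, edist_nndist]
  gcongr
  exact inv_add_le_rpow_neg_half_mul_rpow_neg_half _ _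

lemma tsum_overlapKernel_le_gapMajorant_add (t s : ℝ × ℝ) :
    ∑' n, overlapKernel (n + 1) t s ≤ gapMajorant t s + gapMajorant s t := by
  rcases le_total (s.2 - s.1) (t.2 - t.1) with hlen | hlen
  · exact (tsum_overlapKernel_le_gapMajorant_of_length_le hlen).trans le_self_add
  · simp_rw [overlapKernel_comm _ t s]
    exact (tsum_overlapKernel_le_gapMajorant_of_length_le hlen).trans le_add_self

lemma tsum_gapEnergy_le (T Λ : ℝ) :
    ∑' n, gapEnergy T Λ (n + 1) ≤ 16 * (ENNReal.ofReal T * ENNReal.ofReal Λ) := by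
  have hmeas (n : ℕ) := measurable_overlapKernel (n + 1)
  calc ∑' n, gapEnergy T Λ (n + 1)
    _ = ∫⁻ t in gapRegion T Λ, ∫⁻ s in gapRegion T Λ, ∑' n, overlapKernel (n + 1) t s := by
        simp_rw [gapEnergy]
        rw [← lintegral_tsum fun n => (hmeas n).lintegral_prod_right.aemeasurable]
        refine lintegral_congr fun t => (lintegral_tsum fun n => ?_).symm
        exact ((hmeas n).comp measurable_prodMk_left).aemeasurable
    _ ≤ 2 * 8 * volume.restrict (gapRegion T Λ) Set.univ :=
        lintegral_lintegral_le_of_le_add_swap measurable_gapMajorant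
          tsum_overlapKernel_le_gapMajorant_add fun t =>
            (setLIntegral_le_lintegral _ _).trans (lintegral_gapMajorant_le t)
    _ ≤ 16 * (ENNReal.ofReal T * ENNReal.ofReal Λ) := by
        rw [Measure.restrict_apply_univ, show (2 * 8 : ℝ≥0∞) = 16 by norm_num]
        gcongr
        exact volume_gapRegion_le T Λ

lemma tsum_chaosCoeff_mul_gapEnergy_le {T : ℝ} (hT : 0 ≤ T) (Λ : ℝ) :
    ∑' q : ℕ × ℕ, ENNReal.ofReal (chaosCoeff q) *
        (if q.1 + q.2 = 0 then 0 else gapEnergy T Λ (q.1 + q.2)) ≤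
      ENNReal.ofReal (4 / π ^ 2 * T * Λ) := by
  let E : ℕ → ℝ≥0∞ := fun n => if n = 0 then 0 else gapEnergy T Λ n
  calc ∑' q : ℕ × ℕ, ENNReal.ofReal (chaosCoeff q) * E (q.1 + q.2)
    _ = ∑' n, ENNReal.ofReal (1 / (2 * π) ^ 2) * E n := by
        rw [tsum_mul_apply_add]
        refine tsum_congr fun n => ?_
        rw [← ENNReal.ofReal_sum_of_nonneg fun q _ => chaosCoeff_nonneg q,
          sum_antidiagonal_chaosCoeff]
    _ = ENNReal.ofReal (1 / (2 * π) ^ 2) * ∑' n, gapEnergy T Λ (n + 1) := by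
        rw [ENNReal.tsum_mul_left, tsum_eq_zero_add' ENNReal.summable]
        simp [E]
    _ ≤ ENNReal.ofReal (1 / (2 * π) ^ 2) * (16 * (ENNReal.ofReal T * ENNReal.ofReal Λ)) := by
        gcongr
        exact tsum_gapEnergy_le T Λ
    _ = ENNReal.ofReal (4 / π ^ 2 * T * Λ) := by
        rw [← ENNReal.ofReal_ofNat, ← ENNReal.ofReal_mul hT, ← ENNReal.ofReal_mul (by norm_num),
          ← ENNReal.ofReal_mul (by positivity)]
        congr 1
        ring

lemma four_div_pi_sq_le_log_sq {x : ℝ} (hx : 0 < x) (hx_half : x ≤ 1 / 2) :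
    4 / π ^ 2 ≤ Real.log x ^ 2 := by
  have hlog : Real.log x ≤ -(2 / 3) := by
    have h := Real.log_le_log hx hx_half
    rw [one_div, Real.log_inv] at h
    linarith [Real.log_two_gt_d9]
  calc 4 / π ^ 2 ≤ 4 / 3 ^ 2 := by gcongr; exact pi_gt_three.le
    _ ≤ Real.log x ^ 2 := by nlinarith

theorem gap_regularization_rate_general {T : ℝ} (hT : 0 ≤ T) (Λ : ℝ) :
    (∑' q : ℕ × ℕ,
        if 1 ≤ q.1 + q.2 then
          ENNReal.ofReal (chaosCoeff q) *
            ∫⁻ x in Set.univ.pi (fun _ : Fin (2 * (q.1 + q.2)) => Set.Icc (0 : ℝ) T),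
              ENNReal.ofReal (gapKernel T Λ (q.1 + q.2) x ^ 2)
        else 0) ≤
      ENNReal.ofReal (4 / π ^ 2 * T * Λ) := by
  refine (ENNReal.tsum_le_tsum fun q => ?_).trans (tsum_chaosCoeff_mul_gapEnergy_le hT Λ)
  split_ifs with hle heq heq
  · omega
  · gcongr
    exact setLIntegral_gapKernel_sq_le heq _
  all_goals exact zero_le

/-- Rate of convergence of the gap regularization (Theorem 2 of the paper):
with `R_{n,Λ}(u₁,…,u_{2n}) = ∫∫_{0 ≤ t₁ ≤ min uᵢ, max uᵢ ≤ t₂ ≤ T, t₂−t₁ ≤ Λ}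
(t₂−t₁)^(−(1+n)) dt₁ dt₂`, there is a constant `C > 0` (depending only on `T`)
such that for all `0 < Λ ≤ min(T,1)/2`,
`∑_{𝐧=(n₁,n₂), n₁+n₂ ≥ 1} (2n₁)!(2n₂)!/((2π)² 4^{n₁+n₂} (n₁!n₂!)²) ·
‖R_{n₁+n₂,Λ}‖²_{L²([0,T]^{2(n₁+n₂)})} ≤ C Λ (ln Λ)²`, i.e.
`‖L^(2) − L^(2)(Λ)‖² = O(TΛ ln²Λ)`. -/
theorem gap_regularization_rate (T : ℝ) (hT : 0 < T) :
    ∃ C : ℝ, 0 < C ∧ ∀ Λ : ℝ, 0 < Λ → Λ ≤ min T 1 / 2 →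
      (∑' q : ℕ × ℕ,
          if 1 ≤ q.1 + q.2 then
            ENNReal.ofReal
                ((((2 * q.1).factorial * (2 * q.2).factorial : ℕ) : ℝ) /
                  ((2 * Real.pi) ^ 2 * 4 ^ (q.1 + q.2) *
                    ((q.1.factorial * q.2.factorial : ℕ) : ℝ) ^ 2)) *
              ∫⁻ x in Set.univ.pi
                  (fun _ : Fin (2 * (q.1 + q.2)) => Set.Icc (0:ℝ) T),
                ENNReal.ofReal
                  ((∫ t in {t : ℝ × ℝ | 0 ≤ t.1 ∧ t.1 ≤ (⨅ i, x i) ∧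
                        (⨆ i, x i) ≤ t.2 ∧ t.2 ≤ T ∧ t.2 - t.1 ≤ Λ},
                      (t.2 - t.1) ^ (-(1 + (q.1 + q.2 : ℕ) : ℝ))) ^ 2)
          else 0) ≤
        ENNReal.ofReal (C * Λ * (Real.log Λ) ^ 2) := by
  refine ⟨T, hT, fun Λ hΛ hΛ_le => ?_⟩
  have hΛ_half : Λ ≤ 1 / 2 := hΛ_le.trans (by gcongr; exact min_le_right T 1)
  refine (gap_regularization_rate_general hT.le Λ).trans (ENNReal.ofReal_le_ofReal ?_)
  calc 4 / π ^ 2 * T * Λ = T * Λ * (4 / π ^ 2) := by ring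
    _ ≤ T * Λ * Real.log Λ ^ 2 := by gcongr; exact four_div_pi_sq_le_log_sq hΛ hΛ_half
end

section
/- Let (Ω, ℱ, μ) be a probability space, let T > 0, and let X be a real random variable on Ω. Suppose there exist constants k ≥ 0 and K > 0 and, for each Λ ∈ (0,1), a real random variable X_Λ on Ω such that X_Λ ≥ −k − (T/(2π))·|ln Λ| almost surely and E[(X_Λ − X)²] ≤ K·Λ·(ln Λ)². Then for every α with 0 < α < 2π/T and every N > k, setting Λ = exp(−α(N−k)), one has μ( X ≤ −N ) ≤ ( K α² / (1 − Tα/(2π))² ) · exp( −α(N−k) ). -/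
open MeasureTheory Real

/-!
Almost surely, `X ≤ −N` forces `X_Λ − X ≥ N − k − (T/2π)|ln Λ|`, so Chebyshev's inequality gives
`μ(X ≤ −N) ≤ KΛ ln²Λ / (N − k − (T/2π)|ln Λ|)²` as soon as the gap is positive. For
`Λ = exp(−α(N − k))` both `|ln Λ|` and the gap are multiples of `N − k`; the two factors `(N − k)²`
cancel, and `Tα < 2π` is what keeps the gap positive.
-/

section Chebyshev

variable {Ω : Type*} [MeasurableSpace Ω] {μ : Measure Ω} {X Y : Ω → ℝ} {a b : ℝ}

lemma meas_le_le_lintegral_pow_sub_div (hXY : AEMeasurable (fun ω ↦ Y ω - X ω) μ)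
    (hY : ∀ᵐ ω ∂μ, a ≤ Y ω) (hba : b < a) (n : ℕ) :
    μ {ω | X ω ≤ b} ≤
      (∫⁻ ω, ENNReal.ofReal ((Y ω - X ω) ^ n) ∂μ) / ENNReal.ofReal ((a - b) ^ n) := by
  have hgap : 0 < a - b := sub_pos.mpr hba
  calc μ {ω | X ω ≤ b}
      ≤ μ {ω | ENNReal.ofReal ((a - b) ^ n) ≤ ENNReal.ofReal ((Y ω - X ω) ^ n)} := by
        refine measure_mono_ae ?_
        filter_upwards [hY] with ω hYω (hXω : X ω ≤ b)
        exact ENNReal.ofReal_le_ofReal (pow_le_pow_left₀ hgap.le (sub_le_sub hYω hXω) n)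
    _ ≤ _ := meas_ge_le_lintegral_div (hXY.pow_const n).ennreal_ofReal
        (ENNReal.ofReal_pos.mpr (pow_pos hgap n)).ne' ENNReal.ofReal_ne_top

lemma meas_le_le_ofReal_div_of_lintegral_pow_sub_le
    (hXY : AEMeasurable (fun ω ↦ Y ω - X ω) μ) (hY : ∀ᵐ ω ∂μ, a ≤ Y ω) (hba : b < a)
    {n : ℕ} {ε : ℝ} (hε : ∫⁻ ω, ENNReal.ofReal ((Y ω - X ω) ^ n) ∂μ ≤ ENNReal.ofReal ε) :
    μ {ω | X ω ≤ b} ≤ ENNReal.ofReal (ε / (a - b) ^ n) := by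
  rw [ENNReal.ofReal_div_of_pos (pow_pos (sub_pos.mpr hba) n)]
  exact (meas_le_le_lintegral_pow_sub_div hXY hY hba n).trans (ENNReal.div_le_div_right hε _)

end Chebyshev

theorem chebyshev_tail_estimate_general {Ω : Type*} [MeasurableSpace Ω] {μ : Measure Ω}
    {T k K : ℝ} {X : Ω → ℝ} {XΛ : ℝ → Ω → ℝ} (hX : AEMeasurable X μ)
    (hXΛ : ∀ Λ ∈ Set.Ioo (0 : ℝ) 1, AEMeasurable (XΛ Λ) μ)
    (hlb : ∀ Λ ∈ Set.Ioo (0 : ℝ) 1, ∀ᵐ ω ∂μ, -(k + T / (2 * π) * |log Λ|) ≤ XΛ Λ ω)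
    (hvar : ∀ Λ ∈ Set.Ioo (0 : ℝ) 1,
      ∫⁻ ω, ENNReal.ofReal ((XΛ Λ ω - X ω) ^ 2) ∂μ ≤ ENNReal.ofReal (K * Λ * log Λ ^ 2))
    {α N : ℝ} (hα : 0 < α) (hαT : α * T < 2 * π) (hN : k < N) :
    μ {ω | X ω ≤ -N} ≤
      ENNReal.ofReal (K * α ^ 2 / (1 - T * α / (2 * π)) ^ 2 * exp (-α * (N - k))) := by
  set Λ := exp (-α * (N - k)) with hΛ
  have hNk : 0 < N - k := sub_pos.mpr hN
  have hlog : log Λ = -(α * (N - k)) := by rw [hΛ, log_exp, neg_mul]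
  have habs : |log Λ| = α * (N - k) := by rw [hlog, abs_neg, abs_of_pos (mul_pos hα hNk)]
  have hΛmem : Λ ∈ Set.Ioo (0 : ℝ) 1 :=
    ⟨exp_pos _, exp_lt_one_iff.mpr (mul_neg_of_neg_of_pos (neg_neg_of_pos hα) hNk)⟩
  have hfactor : 0 < 1 - T * α / (2 * π) := by
    rwa [sub_pos, div_lt_one two_pi_pos, mul_comm]
  have hgap : -(k + T / (2 * π) * |log Λ|) - -N = (1 - T * α / (2 * π)) * (N - k) := by
    rw [habs]; ring
  have hlt : -N < -(k + T / (2 * π) * |log Λ|) :=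
    sub_pos.mp (hgap ▸ mul_pos hfactor hNk)
  have hratio : K * Λ * log Λ ^ 2 / (-(k + T / (2 * π) * |log Λ|) - -N) ^ 2 =
      K * α ^ 2 / (1 - T * α / (2 * π)) ^ 2 * Λ := by
    rw [hgap, hlog, neg_sq, mul_pow, mul_pow, ← mul_assoc,
      mul_div_mul_right _ _ (pow_pos hNk 2).ne']
    ring
  rw [← hratio]
  exact meas_le_le_ofReal_div_of_lintegral_pow_sub_le ((hXΛ Λ hΛmem).sub hX)
    (hlb Λ hΛmem) hlt (hvar Λ hΛmem)

/-- Chebyshev tail estimate (Section 4 of the paper): on a probability space,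
if `X` can be approximated by random variables `X_Λ`, `Λ ∈ (0,1)`, with
`X_Λ ≥ −k − (T/2π)|ln Λ|` a.s. and `E[(X_Λ − X)²] ≤ KΛ ln²Λ`, then for every
`0 < α < 2π/T` and `N > k`, taking `Λ = exp(−α(N−k))`,
`μ(X ≤ −N) ≤ (Kα²/(1 − Tα/(2π))²) exp(−α(N−k))`. -/
theorem chebyshev_tail_estimate {Ω : Type*} [MeasurableSpace Ω]
    (μ : Measure Ω) [IsProbabilityMeasure μ] (T : ℝ) (hT : 0 < T)
    (X : Ω → ℝ) (hX : Measurable X) (k K : ℝ) (hk : 0 ≤ k) (hK : 0 < K)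
    (XΛ : ℝ → Ω → ℝ) (hXΛmeas : ∀ Λ ∈ Set.Ioo (0:ℝ) 1, Measurable (XΛ Λ))
    (hlb : ∀ Λ ∈ Set.Ioo (0:ℝ) 1,
      ∀ᵐ ω ∂μ, -(k + T / (2 * Real.pi) * |Real.log Λ|) ≤ XΛ Λ ω)
    (hvar : ∀ Λ ∈ Set.Ioo (0:ℝ) 1,
      (∫⁻ ω, ENNReal.ofReal ((XΛ Λ ω - X ω) ^ 2) ∂μ) ≤
        ENNReal.ofReal (K * Λ * (Real.log Λ) ^ 2)) :
    ∀ α : ℝ, 0 < α → α < 2 * Real.pi / T → ∀ N : ℝ, k < N →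
      μ {ω | X ω ≤ -N} ≤
        ENNReal.ofReal
          (K * α ^ 2 / (1 - T * α / (2 * Real.pi)) ^ 2 *
            Real.exp (-α * (N - k))) := by
  intro α hα hαT N hN
  exact chebyshev_tail_estimate_general hX.aemeasurable (fun Λ hΛ ↦ (hXΛmeas Λ hΛ).aemeasurable)
    hlb hvar hα ((lt_div_iff₀ hT).mp hαT) hN
end

section
/- Let (Ω, ℱ, μ) be a probability space, let T > 0, and let X be a real random variable on Ω. Suppose there exist constants k ≥ 0 and K > 0 and, for each Λ ∈ (0,1), a real random variable X_Λ on Ω such that X_Λ ≥ −k − (T/(2π))·|ln Λ| almost surely and E[(X_Λ − X)²] ≤ K·Λ·(ln Λ)². Then for every g with 0 < g < 2π/T, the expectation E[ exp(−g X) ] is finite. -/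
open MeasureTheory Real

/-!
Write `c = T / 2π`. At the scale `Λ = exp (-t)`, the approximation `X_Λ` is at least `-(k + c t)`,
so on the event `X < -(k + c t + 1)` it lies at distance at least `1` from `X`, and by Chebyshev's
inequality this event has probability at most `K t² exp (-t)`. Where `-X` lies between the
thresholds for `t = n` and `t = n + 1`, `exp (-g X)` is at most a constant times `exp (g c n)`, and
the sum of `n² exp (-(1 - g c) n)` over these shells converges because `g c < 1`.
-/

section

open Filter Set
open scoped ENNReal

theorem summable_nat_rpow_mul_exp_neg_mul (q : ℝ) {b : ℝ} (hb : 0 < b) :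
    Summable fun n : ℕ ↦ (n : ℝ) ^ q * exp (-b * n) := by
  have hO : (fun x : ℝ ↦ x ^ q * exp (-b * x)) =O[atTop] fun x ↦ x ^ (-2 : ℝ) := by
    refine ((Asymptotics.isBigO_refl (fun x : ℝ ↦ x ^ q) atTop).mul
      (isLittleO_exp_neg_mul_rpow_atTop hb (-2 - q)).isBigO).congr' .rfl ?_
    filter_upwards [eventually_gt_atTop 0] with x hx
    rw [← rpow_add hx, add_sub_cancel]
  exact summable_of_isBigO_nat (summable_nat_rpow.2 (by norm_num))
    (hO.comp_tendsto tendsto_natCast_atTop_atTop)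

theorem monotone_le_add_tsum_indicator_Ioi {α : Type*} [LinearOrder α] {φ : α → ℝ≥0∞}
    (hφ : Monotone φ) {t : ℕ → α} (ht : ∀ x, ∃ n, x ≤ t n) (x : α) :
    φ x ≤ φ (t 0) + ∑' n, (Ioi (t n)).indicator (fun _ ↦ φ (t (n + 1))) x := by
  have hle : x ≤ t (Nat.find (ht x)) := Nat.find_spec (ht x)
  rcases hN : Nat.find (ht x) with _ | n
  · exact (hφ (hN ▸ hle)).trans le_self_add
  · have hlt : t n < x := not_le.1 (Nat.find_min (ht x) (hN ▸ n.lt_succ_self))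
    calc φ x ≤ φ (t (n + 1)) := hφ (hN ▸ hle)
      _ = (Ioi (t n)).indicator (fun _ ↦ φ (t (n + 1))) x := by
        rw [indicator_of_mem (mem_Ioi.2 hlt)]
      _ ≤ _ := (ENNReal.le_tsum n).trans le_add_self

variable {Ω : Type*} [MeasurableSpace Ω] {μ : Measure Ω}

theorem lintegral_monotone_comp_le_add_tsum_meas {φ : ℝ → ℝ≥0∞} (hφ : Monotone φ) {t : ℕ → ℝ}
    (ht : ∀ x, ∃ n, x ≤ t n) {f : Ω → ℝ} (hf : AEMeasurable f μ) :
    ∫⁻ ω, φ (f ω) ∂μ ≤ φ (t 0) * μ univ + ∑' n, φ (t (n + 1)) * μ {ω | t n < f ω} := by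
  have hS (n : ℕ) : NullMeasurableSet {ω | t n < f ω} μ :=
    nullMeasurableSet_lt aemeasurable_const hf
  calc ∫⁻ ω, φ (f ω) ∂μ
      ≤ ∫⁻ ω, (φ (t 0) + ∑' n, {ω | t n < f ω}.indicator (fun _ ↦ φ (t (n + 1))) ω) ∂μ :=
        lintegral_mono fun ω ↦ monotone_le_add_tsum_indicator_Ioi hφ ht (f ω)
    _ = φ (t 0) * μ univ + ∑' n, φ (t (n + 1)) * μ {ω | t n < f ω} := by
        rw [lintegral_add_left measurable_const, lintegral_const,
          lintegral_tsum fun n ↦ aemeasurable_const.indicator₀ (hS n)]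
        simp only [lintegral_indicator_const₀ (hS _)]

theorem mul_meas_lt_sub_le_lintegral_rpow {X Y : Ω → ℝ} (hX : AEMeasurable X μ) {a r p : ℝ}
    (hr : 0 ≤ r) (hp : 0 ≤ p) (hY : ∀ᵐ ω ∂μ, a ≤ Y ω) :
    ENNReal.ofReal (r ^ p) * μ {ω | X ω < a - r} ≤
      ∫⁻ ω, ENNReal.ofReal (|Y ω - X ω| ^ p) ∂μ := by
  rw [← lintegral_indicator_const₀ (nullMeasurableSet_lt hX aemeasurable_const)]
  refine lintegral_mono_ae ?_
  filter_upwards [hY] with ω hω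
  by_cases hlt : X ω < a - r
  · have hdist : r ≤ |Y ω - X ω| := le_abs.2 (.inl (by linarith))
    simp only [indicator_of_mem (s := {ω | X ω < a - r}) hlt]
    gcongr
  · simp only [indicator_of_notMem (s := {ω | X ω < a - r}) hlt, zero_le]

theorem lintegral_monotone_comp_neg_le_of_approx {φ : ℝ → ℝ≥0∞} (hφ : Monotone φ) {t : ℕ → ℝ}
    (ht : ∀ x, ∃ n, x ≤ t n) {X : Ω → ℝ} (hX : AEMeasurable X μ) {Y : ℕ → Ω → ℝ}
    (hlb : ∀ n, ∀ᵐ ω ∂μ, -t n ≤ Y n ω) {p : ℝ} (hp : 0 ≤ p) :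
    ∫⁻ ω, φ (-X ω) ∂μ ≤ φ (t 0 + 1) * μ univ +
      ∑' n, φ (t (n + 1) + 1) * ∫⁻ ω, ENNReal.ofReal (|Y n ω - X ω| ^ p) ∂μ := by
  have ht' (x : ℝ) : ∃ n, x ≤ t n + 1 := (ht x).imp fun n hn ↦ hn.trans (by linarith)
  refine (lintegral_monotone_comp_le_add_tsum_meas hφ ht' hX.neg).trans ?_
  gcongr with n
  calc μ {ω | t n + 1 < -X ω}
      = ENNReal.ofReal (1 ^ p) * μ {ω | X ω < -t n - 1} := by
        simp only [one_rpow, ENNReal.ofReal_one, one_mul, ← neg_add', lt_neg (b := X _)]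
    _ ≤ ∫⁻ ω, ENNReal.ofReal (|Y n ω - X ω| ^ p) ∂μ :=
        mul_meas_lt_sub_le_lintegral_rpow hX zero_le_one hp (hlb n)

theorem lintegral_exp_neg_lt_top_of_approx_seq [IsFiniteMeasure μ] {X : Ω → ℝ}
    (hX : AEMeasurable X μ) {Y : ℕ → Ω → ℝ} {b c p g : ℝ} {ε : ℕ → ℝ} (hc : 0 < c) (hp : 0 ≤ p)
    (hg : 0 ≤ g) (hlb : ∀ n : ℕ, ∀ᵐ ω ∂μ, -(b + c * n) ≤ Y n ω)
    (herr : ∀ n, ∫⁻ ω, ENNReal.ofReal (|Y n ω - X ω| ^ p) ∂μ ≤ ENNReal.ofReal (ε n))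
    (hsum : Summable fun n : ℕ ↦ exp (g * c * n) * ε n) :
    ∫⁻ ω, ENNReal.ofReal (exp (-g * X ω)) ∂μ < ∞ := by
  let φ (x : ℝ) : ℝ≥0∞ := ENNReal.ofReal (exp (g * x))
  let t (n : ℕ) : ℝ := b + c * n
  have hφ : Monotone φ := fun x y hxy ↦ by dsimp only [φ]; gcongr
  have ht (x : ℝ) : ∃ n, x ≤ t n :=
    (exists_nat_ge ((x - b) / c)).imp fun n hn ↦ by
      rw [div_le_iff₀' hc] at hn
      exact sub_le_iff_le_add'.1 hn
  have hsum' : Summable fun n ↦ exp (g * (t (n + 1) + 1)) * ε n := by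
    refine (hsum.mul_left (exp (g * (b + c + 1)))).congr fun n ↦ ?_
    rw [← mul_assoc, ← exp_add]
    congr 2
    simp only [t, Nat.cast_succ]
    ring
  calc ∫⁻ ω, ENNReal.ofReal (exp (-g * X ω)) ∂μ
      = ∫⁻ ω, φ (-X ω) ∂μ := by simp only [φ, neg_mul, mul_neg]
    _ ≤ φ (t 0 + 1) * μ univ +
          ∑' n, φ (t (n + 1) + 1) * ∫⁻ ω, ENNReal.ofReal (|Y n ω - X ω| ^ p) ∂μ :=
        lintegral_monotone_comp_neg_le_of_approx hφ ht hX hlb hp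
    _ ≤ φ (t 0 + 1) * μ univ + ∑' n, ENNReal.ofReal (exp (g * (t (n + 1) + 1)) * ε n) := by
        simp only [ENNReal.ofReal_mul (exp_pos _).le]
        gcongr with n
        exact herr n
    _ < ∞ := ENNReal.add_lt_top.2
        ⟨ENNReal.mul_lt_top ENNReal.ofReal_lt_top (measure_lt_top μ univ), hsum'.tsum_ofReal_lt_top⟩

theorem exp_neg_integrable_of_approx_general [IsFiniteMeasure μ] {X : Ω → ℝ}
    (hX : AEMeasurable X μ) {XΛ : ℝ → Ω → ℝ} {k c K a p q : ℝ} (hc : 0 < c) (hp : 0 ≤ p)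
    (hlb : ∀ Λ ∈ Ioo (0 : ℝ) 1, ∀ᵐ ω ∂μ, -(k + c * |log Λ|) ≤ XΛ Λ ω)
    (herr : ∀ Λ ∈ Ioo (0 : ℝ) 1,
      ∫⁻ ω, ENNReal.ofReal (|XΛ Λ ω - X ω| ^ p) ∂μ ≤ ENNReal.ofReal (K * Λ ^ a * |log Λ| ^ q))
    {g : ℝ} (hg : 0 ≤ g) (hgc : g * c < a) :
    ∫⁻ ω, ENNReal.ofReal (exp (-g * X ω)) ∂μ < ∞ := by
  let Λ (n : ℕ) : ℝ := exp (-(n + 1 : ℕ))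
  have hΛ (n : ℕ) : Λ n ∈ Ioo (0 : ℝ) 1 :=
    ⟨exp_pos _, exp_lt_one_iff.2 (neg_lt_zero.2 (Nat.cast_pos.2 n.succ_pos))⟩
  have hlogΛ (n : ℕ) : |log (Λ n)| = (n + 1 : ℕ) := by rw [log_exp, abs_neg, Nat.abs_cast]
  have hlbΛ (n : ℕ) : ∀ᵐ ω ∂μ, -(k + c + c * n) ≤ XΛ (Λ n) ω := by
    convert! hlb (Λ n) (hΛ n) using 4
    rw [hlogΛ, Nat.cast_succ]
    ring
  refine lintegral_exp_neg_lt_top_of_approx_seq hX hc hp hg hlbΛ (fun n ↦ herr (Λ n) (hΛ n)) ?_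
  have hsum : Summable fun n : ℕ ↦
      ((n + 1 : ℕ) : ℝ) ^ q * exp (-(a - g * c) * (n + 1 : ℕ)) :=
    (summable_nat_add_iff 1).2 (summable_nat_rpow_mul_exp_neg_mul q (sub_pos.2 hgc))
  refine (hsum.mul_left (K * exp (-(g * c)))).congr fun n ↦ ?_
  have hexp : exp (-(g * c)) * exp (-(a - g * c) * (n + 1 : ℕ)) = exp (g * c * n) * Λ n ^ a := by
    rw [← exp_mul, ← exp_add, ← exp_add]
    congr 1
    push_cast
    ring
  rw [hlogΛ]
  linear_combination K * ((n + 1 : ℕ) : ℝ) ^ q * hexp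

end

/-- Abstract form of the strengthened Varadhan theorem (Section 4):
on a probability space, if `X` can be approximated by random variables `X_Λ`,
`Λ ∈ (0,1)`, with `X_Λ ≥ −k − (T/2π)|ln Λ|` a.s. and
`E[(X_Λ − X)²] ≤ KΛ ln²Λ`, then `E[exp(−gX)] < ∞` for every `0 < g < 2π/T`. -/
theorem exp_neg_integrable_of_approx {Ω : Type*} [MeasurableSpace Ω]
    (μ : Measure Ω) [IsProbabilityMeasure μ] (T : ℝ) (hT : 0 < T)
    (X : Ω → ℝ) (hX : Measurable X) (k K : ℝ) (hk : 0 ≤ k) (hK : 0 < K)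
    (XΛ : ℝ → Ω → ℝ) (hXΛmeas : ∀ Λ ∈ Set.Ioo (0:ℝ) 1, Measurable (XΛ Λ))
    (hlb : ∀ Λ ∈ Set.Ioo (0:ℝ) 1,
      ∀ᵐ ω ∂μ, -(k + T / (2 * Real.pi) * |Real.log Λ|) ≤ XΛ Λ ω)
    (hvar : ∀ Λ ∈ Set.Ioo (0:ℝ) 1,
      (∫⁻ ω, ENNReal.ofReal ((XΛ Λ ω - X ω) ^ 2) ∂μ) ≤
        ENNReal.ofReal (K * Λ * (Real.log Λ) ^ 2)) :
    ∀ g : ℝ, 0 < g → g < 2 * Real.pi / T →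
      (∫⁻ ω, ENNReal.ofReal (Real.exp (-g * X ω)) ∂μ) < ⊤ := by
  intro g hg hgT
  have hgc : g * (T / (2 * π)) < 1 := by
    rwa [mul_div_assoc', div_lt_one two_pi_pos, ← lt_div_iff₀ hT]
  exact exp_neg_integrable_of_approx_general (p := 2) (q := 2) (a := 1) hX.aemeasurable
    (by positivity) zero_le_two hlb (by simpa using hvar) hg.le hgc
end
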